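/- arXiv:1211.2533 — 7 statements merged into one kernel-verified Lean document; each statement's English description precedes it below -/
import Mathlib

section
/- The integral $K_1 = 16\int_{-\pi/12}^{\pi/12} \frac{\cos^2(2\theta)\,\sin^2(\tfrac{\pi}{6}+2\theta)\,\sin^2(\tfrac{\pi}{6}-2\theta)\,\sin^2(\tfrac{\pi}{12})}{\sin^2(\tfrac{\pi}{12}-\theta)}\,d\theta$ equals $16(2-\sqrt{3})\left(\frac{\pi}{64}+\frac{63\sqrt{3}}{1280}\right)$. -/
open Real MeasureTheory

/-!
Put `u = π/12 - θ`. Then `sin² (2u) / sin² u = 4 cos² u` removes the singularity, and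
`cos (π/6 - 2u) * sin (π/3 - 2u) = (cos 4u + 1/2) / 2`, so away from `u = 0` the integrand is
`(2 - √3) / 8 * (1 + cos 2u) * (cos 4u + 1/2)²`, with `(2 - √3) / 4 = sin² (π/12)`
(`integrand_eq`). This trigonometric polynomial has an elementary antiderivative in
`u`, `sin 2u` and `cos 2u` (`hasDerivAt_primitive`), evaluated between `0` and `π/6`.
-/

lemma sin_sq_pi_div_twelve : sin (π / 12) ^ 2 = (2 - √3) / 4 := by
  have h := cos_two_mul (π / 12)
  rw [show 2 * (π / 12) = π / 6 by ring, cos_pi_div_six, cos_sq'] at h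
  linarith

/-- The integrand in the variable `u = π/12 - θ`. The hypothesis excludes `u = 0`, where the
quotient takes the junk value `0`. -/
lemma integrand_eq (u : ℝ) (hu : sin u ≠ 0) :
    cos (π / 6 - 2 * u) ^ 2 * sin (π / 3 - 2 * u) ^ 2 * sin (2 * u) ^ 2 * sin (π / 12) ^ 2
        / sin u ^ 2
      = (2 - √3) / 8 * ((1 + cos (2 * u)) * (3 / 2 - 2 * sin (2 * u) ^ 2) ^ 2) := by
  have h3 : √3 ^ 2 = 3 := sq_sqrt (by norm_num)
  -- Here `3/2 - 2 sin² 2u` is `cos 4u + 1/2`, so this is the product-to-sum formula.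
  have hprod : cos (π / 6 - 2 * u) * sin (π / 3 - 2 * u)
      = (3 / 2 - 2 * sin (2 * u) ^ 2) / 2 := by
    rw [cos_sub, sin_sub, cos_pi_div_six, sin_pi_div_six, cos_pi_div_three, sin_pi_div_three]
    linear_combination (3 / 4) * sin_sq_add_cos_sq (2 * u) + (cos (2 * u) ^ 2 / 4) * h3
  have hquot : sin (2 * u) ^ 2 / sin u ^ 2 = 2 * (1 + cos (2 * u)) := by
    rw [sin_two_mul, cos_two_mul]
    field_simp
    ring
  calc _ = (cos (π / 6 - 2 * u) * sin (π / 3 - 2 * u)) ^ 2 * sin (π / 12) ^ 2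
          * (sin (2 * u) ^ 2 / sin u ^ 2) := by ring
    _ = _ := by rw [hprod, hquot, sin_sq_pi_div_twelve]; ring

/-- The terms with a factor `cos 2u` integrate to a polynomial in `s = sin 2u`; the others are
`(cos 4u + 1/2)²`, whose primitive is written in terms of `s` and `cos 2u`. -/
lemma hasDerivAt_primitive (u : ℝ) :
    HasDerivAt (fun u : ℝ => (9 / 4 * sin (2 * u) - 2 * sin (2 * u) ^ 3
        + 4 / 5 * sin (2 * u) ^ 5 + 3 / 2 * u
        + (3 / 2 * sin (2 * u) - sin (2 * u) ^ 3) * cos (2 * u)) / 2)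
      ((1 + cos (2 * u)) * (3 / 2 - 2 * sin (2 * u) ^ 2) ^ 2) u := by
  have h2 : HasDerivAt (fun u : ℝ => 2 * u) 2 u := by
    simpa using (hasDerivAt_id u).const_mul (2 : ℝ)
  have hs := h2.sin
  have hc := h2.cos
  refine ((((((hs.const_mul (9 / 4)).sub ((hs.pow 3).const_mul 2)).add
    ((hs.pow 5).const_mul (4 / 5))).add ((hasDerivAt_id u).const_mul (3 / 2))).add
    (((hs.const_mul (3 / 2)).sub (hs.pow 3)).mul hc)).div_const 2).congr_deriv ?_
  simp only [Pi.pow_apply, Pi.sub_apply]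
  push_cast
  have hcs := cos_sq' (2 * u)
  generalize cos (2 * u) = c at *
  generalize sin (2 * u) = s at *
  linear_combination (3 / 2 - 3 * s ^ 2) * hcs

lemma integral_trig :
    ∫ u in (0 : ℝ)..(π / 6), (1 + cos (2 * u)) * (3 / 2 - 2 * sin (2 * u) ^ 2) ^ 2
      = π / 8 + 63 * √3 / 160 := by
  rw [intervalIntegral.integral_eq_sub_of_hasDerivAt (fun u _ => hasDerivAt_primitive u)
    (Continuous.intervalIntegrable (by fun_prop) _ _)]
  rw [show 2 * (π / 6) = π / 3 by ring, sin_pi_div_three, cos_pi_div_three]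
  have h3 : √3 ^ 2 = 3 := sq_sqrt (by norm_num)
  simp only [mul_zero, sin_zero]
  generalize √3 = r at *
  linear_combination (-5 * r / 32 + (r ^ 3 + 3 * r) / 80) * h3

/-- `K₁ = 16 ∫_{-π/12}^{π/12} cos²(2θ) sin²(π/6+2θ) sin²(π/6-2θ) sin²(π/12)/sin²(π/12-θ) dθ
    = 16(2-√3)(π/64 + 63√3/1280)`. -/
theorem stmt1 :
    (16 : ℝ) * (∫ θ in (-(π/12))..(π/12),
      (cos (2*θ))^2 * (sin (π/6 + 2*θ))^2 * (sin (π/6 - 2*θ))^2 * (sin (π/12))^2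
        / (sin (π/12 - θ))^2)
    = 16 * (2 - Real.sqrt 3) * (π/64 + 63 * Real.sqrt 3 / 1280) := by
  have hsub := intervalIntegral.integral_comp_sub_left (a := -(π / 12)) (b := π / 12)
    (fun u => cos (π / 6 - 2 * u) ^ 2 * sin (π / 3 - 2 * u) ^ 2 * sin (2 * u) ^ 2
      * sin (π / 12) ^ 2 / sin u ^ 2) (π / 12)
  have h₁ (θ : ℝ) : 2 * (π / 12 - θ) = π / 6 - 2 * θ := by ring
  have h₂ (θ : ℝ) : π / 6 - (π / 6 - 2 * θ) = 2 * θ := by ring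
  have h₃ (θ : ℝ) : π / 3 - (π / 6 - 2 * θ) = π / 6 + 2 * θ := by ring
  simp only [h₁, h₂, h₃] at hsub
  rw [hsub, show π / 12 - π / 12 = 0 by ring, show π / 12 - -(π / 12) = π / 6 by ring]
  have hpi := pi_pos
  -- `intervalIntegral` runs over the half-open interval `(0, π/6]`, which omits `u = 0`.
  rw [intervalIntegral.integral_congr_ae (g := fun u =>
      (2 - √3) / 8 * ((1 + cos (2 * u)) * (3 / 2 - 2 * sin (2 * u) ^ 2) ^ 2))
      (Filter.Eventually.of_forall fun u hu => by
        rw [Set.uIoc_of_le (by positivity)] at hu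
        exact integrand_eq u (sin_pos_of_pos_of_lt_pi hu.1 (by linarith [hu.2])).ne'),
    intervalIntegral.integral_const_mul, integral_trig]
  ring
end

section
/- The integral $K_3 = 16\int_{-\pi/12}^{\pi/12} \frac{\cos^2(2\theta)\,\sin^2(\tfrac{\pi}{6}+2\theta)\,\sin^2(\tfrac{\pi}{6}-2\theta)\,\sin^2(\tfrac{5\pi}{12})}{\sin^2(\tfrac{5\pi}{12}-\theta)}\,d\theta$ is strictly less than $\frac{2+\sqrt{3}}{6}\cdot\frac{\pi}{6}$. -/
/-!
The triple-angle identity `cos x · cos (π/3 - x) · cos (π/3 + x) = cos (3x) / 4` gives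
`W(θ) = cos² (6θ) / 16`, whose integral over `[-π/12, π/12]` is `π/192`. On this interval
`5π/12 - θ` lies in `[π/3, π/2]`, so `sin² (5π/12 - θ) ≥ 3/4`, while `sin² (5π/12) = (2 + √3)/4`.
Hence the weight `sin² (5π/12) / sin² (5π/12 - θ)` is at most `(2 + √3)/3`, and integrating this
bound gives exactly the right-hand side. Strictness comes from `θ = 0`, where the weight is `1`.
-/

open Real MeasureTheory

lemma W_eq (θ : ℝ) :
    (cos (2*θ))^2 * (sin (π/6 + 2*θ))^2 * (sin (π/6 - 2*θ))^2 = (cos (6*θ))^2 / 16 := by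
  have h6 : cos (6*θ) = 4 * cos (2*θ)^3 - 3 * cos (2*θ) := by
    rw [← cos_three_mul]; congr 1; ring
  have h3 : √3 ^ 2 = (3:ℝ) := sq_sqrt (by norm_num)
  have hs : sin (2*θ)^2 = 1 - cos (2*θ)^2 := sin_sq _
  have hp : sin (π/6 + 2*θ) * sin (π/6 - 2*θ) = cos (2*θ)^2 - 3/4 := by
    rw [sin_add, sin_sub, sin_pi_div_six, cos_pi_div_six]
    linear_combination (-(sin (2*θ))^2/4) * h3 - (3/4) * hs
  rw [h6, mul_assoc, ← mul_pow, hp]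
  ring

lemma sin_sq_five_pi_div_twelve : (sin (5*π/12))^2 = (2 + √3) / 4 := by
  have h : cos (2 * (5*π/12)) = -(√3/2) := by
    rw [← cos_pi_div_six, ← cos_pi_sub]; congr 1; ring
  rw [sin_sq_eq_half_sub, h]; ring

lemma sin_sq_lower {θ : ℝ} (h1 : -(π/12) ≤ θ) (h2 : θ ≤ π/12) :
    3/4 ≤ (sin (5*π/12 - θ))^2 := by
  have hs : sin (π/3) ≤ sin (5*π/12 - θ) :=
    sin_le_sin_of_le_of_le_pi_div_two (by linarith [pi_pos]) (by linarith) (by linarith)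
  rw [sin_pi_div_three] at hs
  have h3 : √3 ^ 2 = (3:ℝ) := sq_sqrt (by norm_num)
  nlinarith [sqrt_nonneg (3:ℝ)]

lemma integral_cos_six_sq : ∫ θ in (-(π/12))..(π/12), (cos (6*θ))^2 = π/12 := by
  rw [intervalIntegral.integral_comp_mul_left (fun x => cos x ^ 2) (by norm_num : (6:ℝ) ≠ 0),
    integral_cos_sq]
  have e1 : 6 * (π/12) = π/2 := by ring
  have e2 : 6 * (-(π/12)) = -(π/2) := by ring
  rw [e1, e2]
  simp
  ring

/-- `K₃ = 16 ∫ W(θ) sin²(5π/12)/sin²(5π/12-θ) dθ < ((2+√3)/6)·(π/6)`, where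
`W(θ) = cos²(2θ) sin²(π/6+2θ) sin²(π/6-2θ)`. -/
theorem stmt4 :
    (16 : ℝ) * (∫ θ in (-(π/12))..(π/12),
      (cos (2*θ))^2 * (sin (π/6 + 2*θ))^2 * (sin (π/6 - 2*θ))^2 * (sin (5*π/12))^2
        / (sin (5*π/12 - θ))^2)
    < (2 + Real.sqrt 3) / 6 * (π/6) := by
  have hpi := pi_pos
  have h3 : 0 ≤ √3 := sqrt_nonneg 3
  simp only [W_eq]
  have key : (∫ θ in (-(π/12))..(π/12),
      (cos (6*θ))^2 / 16 * (sin (5*π/12))^2 / (sin (5*π/12 - θ))^2)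
      < ∫ θ in (-(π/12))..(π/12), (2 + √3) / 48 * (cos (6*θ))^2 := by
    apply intervalIntegral.integral_lt_integral_of_continuousOn_of_le_of_exists_lt
    · linarith
    · apply ContinuousOn.div (by fun_prop) (by fun_prop)
      intro θ hθ
      have := sin_sq_lower hθ.1 hθ.2
      positivity
    · fun_prop
    · intro θ hθ
      have hl := sin_sq_lower hθ.1.le hθ.2
      rw [sin_sq_five_pi_div_twelve, div_le_iff₀ (by linarith)]
      have hc : 0 ≤ (2 + √3) / 48 * (cos (6*θ))^2 := by positivity
      nlinarith
    · refine ⟨0, ⟨by linarith, by linarith⟩, ?_⟩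
      simp only [mul_zero, cos_zero, sub_zero, sin_sq_five_pi_div_twelve]
      have h1 : 1 < √3 := by rw [lt_sqrt (by norm_num)]; norm_num
      rw [div_lt_iff₀ (by positivity)]
      nlinarith
  rw [intervalIntegral.integral_const_mul, integral_cos_six_sq] at key
  linarith
end

section
/- Let $I_2$ be the $2\times 2$ identity matrix and $J = \begin{pmatrix}0&-1\\1&0\end{pmatrix}$. Define $10\times 10$ real matrices in $2\times 2$ blocks $(B_{pq})_{p,q=1}^{5}$: $A_\xi$ is block-diagonal with diagonal blocks $\sqrt{3}I_2,\ \frac{1}{\sqrt{3}}I_2,\ 0,\ -\frac{1}{\sqrt{3}}I_2,\ -\sqrt{3}I_2$; $A_{\bar\zeta}$ has $B_{12}=B_{21}=-I_2$, $B_{24}=B_{42}=\frac{2}{\sqrt{3}}I_2$, $B_{45}=B_{54}=-I_2$ and all other blocks zero; $A_{\zeta}$ has $B_{12}=J$, $B_{21}=-J$, $B_{24}=-\frac{2}{\sqrt{3}}J$, $B_{42}=\frac{2}{\sqrt{3}}J$, $B_{45}=J$, $B_{54}=-J$ and all other blocks zero. Then for all real $t,s$, the matrix $A(t,s) = \cos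 t\, A_\xi + \sin t\cos s\, A_{\bar\zeta} + \sin t\sin s\, A_{\zeta}$ has characteristic polynomial $\det(xI_{10}-A(t,s)) = x^2(x^2-3)^2\big(x^2-\tfrac{1}{3}\big)^2$; in particular its eigenvalues are $\sqrt{3}, \frac{1}{\sqrt{3}}, 0, -\frac{1}{\sqrt{3}}, -\sqrt{3}$, each with multiplicity $2$. -/
/-!
All the `2 × 2` blocks involved are combinations of `I` and `J`, that is, matrices of multiplication
by complex numbers in the real basis `1, i`. So `x - A(t,s)` is the realification of a `5 × 5`
complex matrix (`shapeC`), and by `Matrix.det_det` its determinant is the squared modulus of the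
complex determinant. After splitting off the third coordinate, the complex matrix is tridiagonal
Hermitian; its off-diagonal entries are constant multiples of `sin t · e^{∓is}` and enter the
determinant only through products of transposed pairs, which are multiples of `sin² t`, so
`s` drops out, and `cos² t + sin² t = 1` removes `t` (`det_shapeC`).
The complex determinant is thus the real number `x (x² - 3) (x² - 1/3)`.
-/

open Real Matrix

/-- Assemble a `5 × 5` array of `2 × 2` blocks into a `10 × 10` matrix. -/
def ofBlocks (M : Matrix (Fin 5) (Fin 5) (Matrix (Fin 2) (Fin 2) ℝ)) :
    Matrix (Fin 10) (Fin 10) ℝ := fun i j =>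
  M ⟨i.val / 2, by have := i.isLt; omega⟩ ⟨j.val / 2, by have := j.isLt; omega⟩
    ⟨i.val % 2, by omega⟩ ⟨j.val % 2, by omega⟩

/-- `J = [[0,-1],[1,0]]`. -/
def Jmat : Matrix (Fin 2) (Fin 2) ℝ := !![0, -1; 1, 0]

/-- The shape operator `A_ξ`: block diagonal with blocks `√3 I, (1/√3) I, 0, -(1/√3) I, -√3 I`. -/
noncomputable def Axi : Matrix (Fin 10) (Fin 10) ℝ :=
  ofBlocks !![Real.sqrt 3 • 1, 0, 0, 0, 0;
              0, (1 / Real.sqrt 3) • 1, 0, 0, 0;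
              0, 0, 0, 0, 0;
              0, 0, 0, (-(1 / Real.sqrt 3)) • 1, 0;
              0, 0, 0, 0, (-Real.sqrt 3) • 1]

/-- The shape operator `A_ζ̄`: `B₁₂ = B₂₁ = -I`, `B₂₄ = B₄₂ = (2/√3) I`, `B₄₅ = B₅₄ = -I`,
other blocks zero. -/
noncomputable def Azetabar : Matrix (Fin 10) (Fin 10) ℝ :=
  ofBlocks !![0, -1, 0, 0, 0;
              -1, 0, 0, (2 / Real.sqrt 3) • 1, 0;
              0, 0, 0, 0, 0;
              0, (2 / Real.sqrt 3) • 1, 0, 0, -1;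
              0, 0, 0, -1, 0]

/-- The shape operator `A_ζ`: `B₁₂ = Jmat`, `B₂₁ = -Jmat`, `B₂₄ = -(2/√3) Jmat`, `B₄₂ = (2/√3) Jmat`,
`B₄₅ = Jmat`, `B₅₄ = -Jmat`, other blocks zero. -/
noncomputable def Azeta : Matrix (Fin 10) (Fin 10) ℝ :=
  ofBlocks !![0, Jmat, 0, 0, 0;
              -Jmat, 0, 0, (-(2 / Real.sqrt 3)) • Jmat, 0;
              0, 0, 0, 0, 0;
              0, (2 / Real.sqrt 3) • Jmat, 0, 0, Jmat;
              0, 0, 0, -Jmat, 0]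

/-- The complex `5 × 5` matrix whose realification is `x - A(t,s)`, with `b = 1/√3` (so `√3 = 3b`),
`c = cos t`, `p = sin t · e^{-is}` and `q = sin t · e^{is}`. -/
def shapeC (x b c p q : ℂ) : Matrix (Fin 5) (Fin 5) ℂ :=
  !![x - 3 * b * c, p, 0, 0, 0;
     q, x - b * c, 0, -(2 * b * p), 0;
     0, 0, x, 0, 0;
     0, -(2 * b * q), 0, x + b * c, p;
     0, 0, 0, q, x + 3 * b * c]

theorem det_shapeC (x b c p q : ℂ) (hb : b ^ 2 = 1 / 3) (hpq : p * q = 1 - c ^ 2) :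
    (shapeC x b c p q).det = x * (x ^ 2 - 3) * (x ^ 2 - 1 / 3) := by
  have expand : (shapeC x b c p q).det =
      x * ((x ^ 2 - 9 * b ^ 2 * c ^ 2) * (x ^ 2 - b ^ 2 * c ^ 2)
        - (p * q) * (2 * x ^ 2 + 6 * b ^ 2 * c ^ 2)
        - 4 * b ^ 2 * (p * q) * (x ^ 2 - 9 * b ^ 2 * c ^ 2) + (p * q) ^ 2) := by
    simp [shapeC, Matrix.det_succ_row_zero, Fin.sum_univ_succ, Fin.succAbove]
    ring
  rw [expand, hb, hpq]
  ring

/-- Multiplication by `z` has matrix `re z · I + im z · J` in the basis `1, i`. -/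
theorem leftMulMatrix_eq (z : ℂ) :
    Algebra.leftMulMatrix Complex.basisOneI z = z.re • 1 + z.im • Jmat := by
  rw [Algebra.leftMulMatrix_complex]
  ext i j
  fin_cases i <;> fin_cases j <;> simp [Jmat]

theorem ofBlocks_submatrix (M : Matrix (Fin 5) (Fin 5) (Matrix (Fin 2) (Fin 2) ℝ)) :
    (ofBlocks M).submatrix (finProdFinEquiv (m := 5) (n := 2)) (finProdFinEquiv (m := 5) (n := 2))
      = Matrix.comp _ _ _ _ _ M := by
  have hdiv (i : Fin 5) (k : Fin 2) : (finProdFinEquiv (i, k)).val / 2 = i.val := by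
    simp only [finProdFinEquiv_apply_val]
    omega
  have hmod (i : Fin 5) (k : Fin 2) : (finProdFinEquiv (i, k)).val % 2 = k.val := by
    simp only [finProdFinEquiv_apply_val]
    omega
  ext ⟨i, k⟩ ⟨j, l⟩
  simp only [Matrix.submatrix_apply, ofBlocks, Matrix.comp_apply, hdiv, hmod, Fin.eta]

/-- The realification of `shapeC`, read along `Fin 5 × Fin 2 ≃ Fin 10`, is `x - A(t,s)`. -/
theorem comp_shapeC (t s x : ℝ) :
    (x • (1 : Matrix (Fin 10) (Fin 10) ℝ)
        - (Real.cos t • Axi + (Real.sin t * Real.cos s) • Azetabar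
            + (Real.sin t * Real.sin s) • Azeta)).submatrix
          (finProdFinEquiv (m := 5) (n := 2)) (finProdFinEquiv (m := 5) (n := 2)) =
      Matrix.comp _ _ _ _ _ ((shapeC x ((1 / √3 : ℝ) : ℂ) (Real.cos t : ℝ)
        ⟨Real.sin t * Real.cos s, -(Real.sin t * Real.sin s)⟩
        ⟨Real.sin t * Real.cos s, Real.sin t * Real.sin s⟩).map
          (Algebra.leftMulMatrix Complex.basisOneI).toRingHom) := by
  have h3 : √3 = 3 * (1 / √3) := by
    have : √3 * √3 = 3 := Real.mul_self_sqrt (by norm_num)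
    field_simp
    linarith
  have hone : (1 : Matrix (Fin 5 × Fin 2) (Fin 5 × Fin 2) ℝ) =
      Matrix.comp _ _ _ _ _ (1 : Matrix (Fin 5) (Fin 5) (Matrix (Fin 2) (Fin 2) ℝ)) :=
    (map_one (Matrix.compRingEquiv (Fin 5) (Fin 2) ℝ)).symm
  simp only [Matrix.submatrix_sub, Matrix.submatrix_add, Matrix.submatrix_smul, Pi.sub_apply,
    Pi.add_apply, Pi.smul_apply, Axi, Azetabar, Azeta, ofBlocks_submatrix,
    Matrix.submatrix_one_equiv]
  have hlin (A B C D : Matrix (Fin 5) (Fin 5) (Matrix (Fin 2) (Fin 2) ℝ)) (c u v : ℝ) :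
      x • Matrix.comp _ _ _ _ _ A - (c • Matrix.comp _ _ _ _ _ B + u • Matrix.comp _ _ _ _ _ C
        + v • Matrix.comp _ _ _ _ _ D)
      = Matrix.comp _ _ _ _ _ (x • A - (c • B + u • C + v • D)) := rfl
  rw [hone, hlin]
  congr 1
  have h2 : 2 / √3 = 2 * (1 / √3) := by ring
  rw [h2]
  generalize 1 / √3 = b at *
  rw [h3]
  clear h2 h3 hone hlin
  generalize Real.sin t * Real.cos s = u
  generalize Real.sin t * Real.sin s = v
  generalize Real.cos t = c
  ext1 i j
  fin_cases i <;> fin_cases j <;>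
    simp [shapeC, leftMulMatrix_eq, Algebra.algebraMap_eq_smul_one] <;> module

/-- The shape operator `A(t,s) = cos t · A_ξ + sin t cos s · A_ζ̄ + sin t sin s · A_ζ` of the focal
submanifold `M₂` (`g = 6`, `(m₁,m₂) = (2,2)`) has characteristic polynomial
`x²(x²-3)²(x²-1/3)²`; in particular its eigenvalues are `√3, 1/√3, 0, -1/√3, -√3`, each with
multiplicity `2`, independently of `(t,s)`. -/
theorem stmt10 (t s x : ℝ) :
    Matrix.det (x • (1 : Matrix (Fin 10) (Fin 10) ℝ)
        - (Real.cos t • Axi + (Real.sin t * Real.cos s) • Azetabar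
            + (Real.sin t * Real.sin s) • Azeta))
      = x^2 * (x^2 - 3)^2 * (x^2 - 1/3)^2 := by
  rw [← Matrix.det_submatrix_equiv_self (finProdFinEquiv (m := 5) (n := 2)), comp_shapeC]
  have hb : (((1 / √3 : ℝ) : ℂ)) ^ 2 = 1 / 3 := by
    rw [← Complex.ofReal_pow, div_pow, Real.sq_sqrt (by norm_num)]
    norm_num
  have hpq : (⟨Real.sin t * Real.cos s, -(Real.sin t * Real.sin s)⟩ : ℂ)
      * ⟨Real.sin t * Real.cos s, Real.sin t * Real.sin s⟩ = 1 - ((Real.cos t : ℝ) : ℂ) ^ 2 := by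
    rw [← Complex.ofReal_pow]
    apply Complex.ext
    · simp only [Complex.mul_re, Complex.sub_re, Complex.one_re, Complex.ofReal_re]
      linear_combination Real.sin t ^ 2 * Real.sin_sq_add_cos_sq s + Real.sin_sq_add_cos_sq t
    · simp only [Complex.mul_im, Complex.sub_im, Complex.one_im, Complex.ofReal_im]
      ring
  have hreal : (x : ℂ) * ((x : ℂ) ^ 2 - 3) * ((x : ℂ) ^ 2 - 1 / 3)
      = ((x * (x ^ 2 - 3) * (x ^ 2 - 1 / 3) : ℝ) : ℂ) := by
    push_cast
    ring
  have key := Matrix.det_det (M := shapeC x ((1 / √3 : ℝ) : ℂ) (Real.cos t : ℝ)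
        ⟨Real.sin t * Real.cos s, -(Real.sin t * Real.sin s)⟩
        ⟨Real.sin t * Real.cos s, Real.sin t * Real.sin s⟩)
    (Algebra.leftMulMatrix Complex.basisOneI).toRingHom
  rw [det_shapeC _ _ _ _ _ hb hpq, hreal] at key
  refine key.symm.trans ?_
  simp only [AlgHom.toRingHom_eq_coe, RingHom.coe_coe, Algebra.leftMulMatrix_complex,
    Matrix.det_fin_two_of, Complex.ofReal_re, Complex.ofReal_im]
  ring
end

section
/- Let $I_2$ be the $2\times 2$ identity matrix, $J = \begin{pmatrix}0&-1\\1&0\end{pmatrix}$, and for real $\phi$ set $R(\phi) = \cos\phi\, I_2 + \sin\phi\, J$. For real $t,s$ define the $10\times 10$ real matrix $A(t,s)$ in $2\times 2$ blocks $(B_{pq})_{p,q=1}^5$ by: $B_{11} = \sqrt{3}\cos t\, I_2$, $B_{15} = \sqrt{3}\sin t\, R(\tfrac{\pi}{2}-s)$, $B_{51} = \sqrt{3}\sin t\, R(s-\tfrac{\pi}{2})$, $B_{55} = -\sqrt{3}\cos t\, I_2$, $B_{22} = \frac{1}{\sqrt{3}}\cos t\, I_2$, $B_{24} = \frac{1}{\sqrt{3}}\sin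 t\, R(\tfrac{\pi}{2}-s)$, $B_{42} = \frac{1}{\sqrt{3}}\sin t\, R(s-\tfrac{\pi}{2})$, $B_{44} = -\frac{1}{\sqrt{3}}\cos t\, I_2$, and all other blocks zero. Then $\det(xI_{10} - A(t,s)) = x^2(x^2-3)^2\big(x^2-\tfrac13\big)^2$; in particular the eigenvalues of $A(t,s)$ are $\sqrt{3}, \frac{1}{\sqrt{3}}, 0, -\frac{1}{\sqrt{3}}, -\sqrt{3}$, each with multiplicity $2$. -/
/-!
Up to a permutation of the basis, `x - A(t,s)` is block diagonal: blocks 1 and 5 couple only with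
each other, blocks 2 and 4 only with each other, and block 3 is `x I₂`. The two `4 × 4` pieces have
the form `[[(x-a) I, -Q], [-Qᵀ, (x+a) I]]`, where `Q = u I + v J` satisfies
`Q Qᵀ = (u² + v²) I`, so their determinant is `(x² - a² - u² - v²)²` (`det_pairBlock`). With
`a = k cos t`, `u = k sin t sin s`, `v = k sin t cos s` this is `(x² - k²)²`, for `k = √3` and
`k = 1/√3`.
-/

open Real Matrix

/-- The rotation `R(φ) = cos φ · I₂ + sin φ · J`. -/
noncomputable def R (φ : ℝ) : Matrix (Fin 2) (Fin 2) ℝ := Real.cos φ • 1 + Real.sin φ • Jmat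

/-- The shape operator `A(t,s)` of the focal submanifold `M₁` (`g = 6`, `(m₁,m₂) = (2,2)`),
given in `2 × 2` blocks: `B₁₁ = √3 cos t I`, `B₁₅ = √3 sin t R(π/2-s)`, `B₅₁ = √3 sin t R(s-π/2)`,
`B₅₅ = -√3 cos t I`, `B₂₂ = (1/√3) cos t I`, `B₂₄ = (1/√3) sin t R(π/2-s)`,
`B₄₂ = (1/√3) sin t R(s-π/2)`, `B₄₄ = -(1/√3) cos t I`, other blocks zero. -/
noncomputable def A (t s : ℝ) : Matrix (Fin 10) (Fin 10) ℝ :=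
  ofBlocks !![(Real.sqrt 3 * Real.cos t) • 1, 0, 0, 0, (Real.sqrt 3 * Real.sin t) • R (π/2 - s);
              0, ((1 / Real.sqrt 3) * Real.cos t) • 1, 0,
                ((1 / Real.sqrt 3) * Real.sin t) • R (π/2 - s), 0;
              0, 0, 0, 0, 0;
              0, ((1 / Real.sqrt 3) * Real.sin t) • R (s - π/2), 0,
                (-((1 / Real.sqrt 3) * Real.cos t)) • 1, 0;
              (Real.sqrt 3 * Real.sin t) • R (s - π/2), 0, 0, 0,
                (-(Real.sqrt 3 * Real.cos t)) • 1]

/-- The matrix `[[(x-a) I, -Q], [-Qᵀ, (x+a) I]]` with `Q = u I + v J`, written out. -/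
def pairBlock (x a u v : ℝ) : Matrix (Fin 4) (Fin 4) ℝ :=
  !![x - a, 0, -u, v; 0, x - a, -v, -u; -u, -v, x + a, 0; v, -u, 0, x + a]

lemma det_pairBlock (x a u v : ℝ) :
    (pairBlock x a u v).det = (x ^ 2 - a ^ 2 - u ^ 2 - v ^ 2) ^ 2 := by
  simp [pairBlock, det_succ_row_zero, Fin.sum_univ_succ, Fin.succAbove]
  ring

/-- With `k`-scaled spherical coordinates as entries, the determinant depends only on `x` and `k`. -/
lemma det_pairBlock_spherical (x k t s : ℝ) :
    (pairBlock x (k * cos t) (k * sin t * sin s) (k * sin t * cos s)).det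
      = (x ^ 2 - k ^ 2) ^ 2 := by
  rw [det_pairBlock]
  congr 1
  linear_combination (-k ^ 2 * sin t ^ 2) * sin_sq_add_cos_sq s - k ^ 2 * sin_sq_add_cos_sq t

/-- The reordering of the basis that groups the `2 × 2` blocks as `{1, 5}`, `{2, 4}`, `{3}`. -/
noncomputable def regroup : (Fin 4 ⊕ Fin 4) ⊕ Fin 2 ≃ Fin 10 :=
  Equiv.ofBijective
    (Sum.elim (Sum.elim ![0, 1, 8, 9] ![2, 3, 6, 7]) ![4, 5]) (by decide)

lemma R_pi_div_two_sub (s : ℝ) : R (π / 2 - s) = !![sin s, -cos s; cos s, sin s] := by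
  ext i j
  fin_cases i <;> fin_cases j <;> simp [R, Jmat, cos_pi_div_two_sub, sin_pi_div_two_sub]

lemma R_sub_pi_div_two (s : ℝ) : R (s - π / 2) = !![sin s, cos s; -cos s, sin s] := by
  ext i j
  fin_cases i <;> fin_cases j <;> simp [R, Jmat, cos_sub_pi_div_two, sin_sub_pi_div_two]

/-- The `4 × 4` matrix `[[P, Q], [Q', S]]` assembled from four `2 × 2` blocks. -/
def assemble (P Q Q' S : Matrix (Fin 2) (Fin 2) ℝ) : Matrix (Fin 4) (Fin 4) ℝ :=
  !![P 0 0, P 0 1, Q 0 0, Q 0 1; P 1 0, P 1 1, Q 1 0, Q 1 1;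
     Q' 0 0, Q' 0 1, S 0 0, S 0 1; Q' 1 0, Q' 1 1, S 1 0, S 1 1]

/-- The blocks are kept generic, so that each of the 100 entrywise equalities is definitional. -/
lemma ofBlocks_submatrix_regroup (P Q Q' S P₁ Q₁ Q₁' S₁ : Matrix (Fin 2) (Fin 2) ℝ) :
    (ofBlocks !![P, 0, 0, 0, Q; 0, P₁, 0, Q₁, 0; 0, 0, 0, 0, 0; 0, Q₁', 0, S₁, 0;
        Q', 0, 0, 0, S]).submatrix regroup regroup =
      fromBlocks (fromBlocks (assemble P Q Q' S) 0 0 (assemble P₁ Q₁ Q₁' S₁)) 0 0 0 := by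
  ext i j
  rcases i with (i | i) | i <;> rcases j with (j | j) | j <;> fin_cases i <;> fin_cases j <;> rfl

lemma smul_one_sub_assemble (x k t s : ℝ) :
    x • (1 : Matrix (Fin 4) (Fin 4) ℝ) -
        assemble ((k * cos t) • 1) ((k * sin t) • R (π / 2 - s)) ((k * sin t) • R (s - π / 2))
          ((-(k * cos t)) • 1) =
      pairBlock x (k * cos t) (k * sin t * sin s) (k * sin t * cos s) := by
  rw [R_pi_div_two_sub, R_sub_pi_div_two]
  ext i j
  fin_cases i <;> fin_cases j <;> simp [assemble, pairBlock]

lemma submatrix_regroup (t s x : ℝ) :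
    (x • (1 : Matrix (Fin 10) (Fin 10) ℝ) - A t s).submatrix regroup regroup =
      fromBlocks
        (fromBlocks
          (pairBlock x (√3 * cos t) (√3 * sin t * sin s) (√3 * sin t * cos s)) 0 0
          (pairBlock x (1 / √3 * cos t) (1 / √3 * sin t * sin s) (1 / √3 * sin t * cos s)))
        0 0 (x • (1 : Matrix (Fin 2) (Fin 2) ℝ)) := by
  have h1 : (x • (1 : Matrix (Fin 10) (Fin 10) ℝ) - A t s).submatrix regroup regroup =
      x • 1 - (A t s).submatrix regroup regroup := by
    rw [← submatrix_one_equiv regroup]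
    rfl
  rw [h1, A, ofBlocks_submatrix_regroup, ← smul_one_sub_assemble, ← smul_one_sub_assemble,
    ← fromBlocks_one, ← fromBlocks_one, fromBlocks_smul, fromBlocks_smul, sub_eq_add_neg,
    fromBlocks_neg, fromBlocks_neg, fromBlocks_add, fromBlocks_add]
  simp only [smul_zero, neg_zero, add_zero, ← sub_eq_add_neg]

/-- The characteristic polynomial of `A(t,s)` is `x²(x²-3)²(x²-1/3)²`; in particular the
eigenvalues of `A(t,s)` are `√3, 1/√3, 0, -1/√3, -√3`, each with multiplicity `2`,
independently of `(t,s)`. -/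
theorem stmt11 (t s x : ℝ) :
    Matrix.det (x • (1 : Matrix (Fin 10) (Fin 10) ℝ) - A t s)
      = x^2 * (x^2 - 3)^2 * (x^2 - 1/3)^2 := by
  have h3 : √(3 : ℝ) ^ 2 = 3 := sq_sqrt (by norm_num)
  rw [← det_submatrix_equiv_self regroup, submatrix_regroup, det_fromBlocks_zero₂₁,
    det_fromBlocks_zero₂₁, det_pairBlock_spherical, det_pairBlock_spherical, div_pow, h3,
    det_smul, det_one, Fintype.card_fin]
  ring
end

section
/- Let $A(t,s)$ be the $10\times 10$ matrix defined in blocks by $B_{11} = \sqrt{3}\cos t\, I_2$, $B_{15} = \sqrt{3}\sin t\, R(\tfrac{\pi}{2}-s)$, $B_{51} = \sqrt{3}\sin t\, R(s-\tfrac{\pi}{2})$, $B_{55} = -\sqrt{3}\cos t\, I_2$, $B_{22} = \frac{1}{\sqrt{3}}\cos t\, I_2$, $B_{24} = \frac{1}{\sqrt{3}}\sin t\, R(\tfrac{\pi}{2}-s)$, $B_{42} = \frac{1}{\sqrt{3}}\sin t\, R(s-\tfrac{\pi}{2})$, $B_{44} = -\frac{1}{\sqrt{3}}\cos t\, I_2$,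 other blocks zero, where $R(\phi)=\cos\phi\,I_2+\sin\phi\,J$, $J=\begin{pmatrix}0&-1\\1&0\end{pmatrix}$. Denote the standard basis of $\mathbb{R}^{10}$ by $e_1,e_{\bar1},e_2,e_{\bar2},\dots,e_5,e_{\bar5}$ (two vectors per block). For $0<t<\pi$ and $s\in\mathbb{R}$, the vectors $\varepsilon_1 = \frac{\sin t\sin s}{\sqrt{2(1-\cos t)}}e_1+\frac{\sin t\cos s}{\sqrt{2(1-\cos t)}}e_{\bar1}+\sqrt{\frac{1-\cos t}{2}}e_5$ and $\varepsilon_{\bar1} = -\frac{\sin t\cos s}{\sqrt{2(1-\cos t)}}e_1+\frac{\sin t\sin s}{\sqrt{2(1-\cos t)}}e_{\bar1}+\sqrt{\frac{1-\cos t}{2}}e_{\bar5}$ are orthonormal and satisfy $A(t,s)\varepsilon_1 = \sqrt{3}\,\varepsilon_1$ and $A(t,s)\varepsilon_{\bar1} = \sqrt{3}\,\varepsilon_{\bar1}$. -/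
/-!
Since `R(π/2 - s) = sin s I + cos s J` and `R(s - π/2)` is its transpose, hence its inverse, the
blocks with indices `1` and `5` form `√3` times the reflection `[[cos t, sin t], [sin t, -cos t]]`,
twisted by this rotation. The reflection fixes the half-angle unit vector `(a, q)` of
`half_angle_relations`, and `ε₁`, `ε₁̄` are its two twisted copies: their block-`1` parts are
`a R(π/2 - s) e` and their block-`5` parts are `q e`, for `e` in the standard basis of `ℝ²`.
Coordinate by coordinate, every claim is a combination of the three half-angle relations with
`sin² s + cos² s = 1`.
-/

open Real Matrix

/-- The half-angle relations behind the eigenvector equations: with `a = sin t / √(2(1 - cos t))`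
and `q = √((1 - cos t)/2)`, the vector `(a, q)` is a unit vector fixed by the reflection
`[[cos t, sin t], [sin t, -cos t]]`. -/
lemma half_angle_relations (t : ℝ) (ht0 : 0 < t) (htpi : t < π) :
    let a := Real.sin t / Real.sqrt (2 * (1 - Real.cos t))
    let q := Real.sqrt ((1 - Real.cos t) / 2)
    a ^ 2 + q ^ 2 = 1 ∧ Real.cos t * a + Real.sin t * q = a ∧
      Real.sin t * a - Real.cos t * q = q := by
  intro a q
  have hc : 0 < 1 - Real.cos t := by
    have := Real.cos_lt_cos_of_nonneg_of_le_pi le_rfl htpi.le ht0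
    rw [Real.cos_zero] at this
    linarith
  have hq : 0 < q := Real.sqrt_pos.mpr (by linarith)
  have hq2 : q ^ 2 = (1 - Real.cos t) / 2 := Real.sq_sqrt (by linarith)
  have hd : Real.sqrt (2 * (1 - Real.cos t)) = 2 * q := by
    rw [Real.sqrt_eq_iff_mul_self_eq (by linarith) (by linarith)]
    linear_combination -4 * hq2
  have ha : 2 * q * a = Real.sin t := by
    simp only [a, hd]
    field_simp
  have hsc := Real.sin_sq_add_cos_sq t
  have hcq : Real.cos t = 1 - 2 * q ^ 2 := by linear_combination 2 * hq2
  have hone : a ^ 2 + q ^ 2 = 1 := by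
    rw [← ha, hcq] at hsc
    have h4 : (4 * q ^ 2) * (a ^ 2 + q ^ 2 - 1) = 0 := by linear_combination hsc
    have := (mul_eq_zero.mp h4).resolve_left (by positivity)
    linarith
  refine ⟨hone, ?_, ?_⟩
  · rw [← ha, hcq]; ring
  · rw [← ha, hcq]; linear_combination 2 * q * hone

/-- Coordinate `k` of block `b`, under the bijection `(b, k) ↦ 2b + k`, of the image of a vector
supported on the first and the last block. -/
lemma ofBlocks_mulVec (M : Matrix (Fin 5) (Fin 5) (Matrix (Fin 2) (Fin 2) ℝ))
    (x y z w : ℝ) (b : Fin 5) (k : Fin 2) :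
    (ofBlocks M *ᵥ ![x, y, 0, 0, 0, 0, 0, 0, z, w]) (finProdFinEquiv (b, k)) =
      M b 0 k 0 * x + M b 0 k 1 * y + (M b 4 k 0 * z + M b 4 k 1 * w) := by
  have hb : ∀ h, (⟨(finProdFinEquiv (b, k) : Fin 10).val / 2, h⟩ : Fin 5) = b := by
    intro h
    ext
    simp only [finProdFinEquiv_apply_val]
    omega
  have hk : ∀ h, (⟨(finProdFinEquiv (b, k) : Fin 10).val % 2, h⟩ : Fin 2) = k := by
    intro h
    ext
    simp only [finProdFinEquiv_apply_val]
    omega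
  have h : ∀ j, ofBlocks M (finProdFinEquiv (b, k)) j =
      M b ⟨j.val / 2, by have := j.isLt; omega⟩ k ⟨j.val % 2, by omega⟩ := by
    intro j
    unfold ofBlocks
    rw [hb, hk]
  simp only [mulVec, dotProduct, h, Fin.sum_univ_succ]
  simp
  ring_nf

/-- For the block pattern of `A(t,s)`, the first and the last block span an invariant subspace. -/
lemma ofBlocks_pattern_mulVec (P Q S T B C D E : Matrix (Fin 2) (Fin 2) ℝ) (x y z w : ℝ) :
    ofBlocks !![P, 0, 0, 0, Q; 0, B, 0, C, 0; 0, 0, 0, 0, 0; 0, D, 0, E, 0; S, 0, 0, 0, T] *ᵥ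
        ![x, y, 0, 0, 0, 0, 0, 0, z, w] =
      ![P 0 0 * x + P 0 1 * y + (Q 0 0 * z + Q 0 1 * w),
        P 1 0 * x + P 1 1 * y + (Q 1 0 * z + Q 1 1 * w), 0, 0, 0, 0, 0, 0,
        S 0 0 * x + S 0 1 * y + (T 0 0 * z + T 0 1 * w),
        S 1 0 * x + S 1 1 * y + (T 1 0 * z + T 1 1 * w)] := by
  have hz : ∀ k, (0 : Matrix (Fin 2) (Fin 2) ℝ) k 0 * x + (0 : Matrix (Fin 2) (Fin 2) ℝ) k 1 * y +
      ((0 : Matrix (Fin 2) (Fin 2) ℝ) k 0 * z + (0 : Matrix (Fin 2) (Fin 2) ℝ) k 1 * w) = 0 := by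
    intro k
    simp only [Matrix.zero_apply, zero_mul, add_zero]
  ext i
  obtain ⟨⟨b, k⟩, rfl⟩ := (finProdFinEquiv (m := 5) (n := 2)).surjective i
  rw [ofBlocks_mulVec]
  fin_cases b <;> fin_cases k
  · rfl
  · rfl
  · exact hz 0
  · exact hz 1
  · exact hz 0
  · exact hz 1
  · exact hz 0
  · exact hz 1
  · rfl
  · rfl

lemma vec_congr {x y z w x' y' z' w' : ℝ} (hx : x = x') (hy : y = y') (hz : z = z')
    (hw : w = w') :
    (![x, y, 0, 0, 0, 0, 0, 0, z, w] : Fin 10 → ℝ) = ![x', y', 0, 0, 0, 0, 0, 0, z', w'] := by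
  rw [hx, hy, hz, hw]

/-- For `0 < t < π`, the vectors
`ε₁ = (sin t sin s)/√(2(1-cos t)) e₁ + (sin t cos s)/√(2(1-cos t)) e₁̄ + √((1-cos t)/2) e₅` and
`ε₁̄ = -(sin t cos s)/√(2(1-cos t)) e₁ + (sin t sin s)/√(2(1-cos t)) e₁̄ + √((1-cos t)/2) e₅̄`
(in the standard basis `e₁, e₁̄, e₂, e₂̄, …, e₅, e₅̄` of `ℝ¹⁰`) are orthonormal eigenvectors of
`A(t,s)` for the eigenvalue `√3`. -/
theorem stmt12 (t s : ℝ) (ht0 : 0 < t) (htpi : t < π) :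
    let d : ℝ := Real.sqrt (2 * (1 - Real.cos t))
    let ε1 : Fin 10 → ℝ :=
      ![Real.sin t * Real.sin s / d, Real.sin t * Real.cos s / d, 0, 0, 0, 0, 0, 0,
        Real.sqrt ((1 - Real.cos t) / 2), 0]
    let ε1b : Fin 10 → ℝ :=
      ![-(Real.sin t * Real.cos s) / d, Real.sin t * Real.sin s / d, 0, 0, 0, 0, 0, 0,
        0, Real.sqrt ((1 - Real.cos t) / 2)]
    ε1 ⬝ᵥ ε1 = 1 ∧ ε1b ⬝ᵥ ε1b = 1 ∧ ε1 ⬝ᵥ ε1b = 0 ∧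
    (A t s).mulVec ε1 = Real.sqrt 3 • ε1 ∧ (A t s).mulVec ε1b = Real.sqrt 3 • ε1b := by
  intro d ε1 ε1b
  obtain ⟨h1, h2, h3⟩ := half_angle_relations t ht0 htpi
  have hs := Real.sin_sq_add_cos_sq s
  have e1 : ε1 = ![Real.sin t / d * Real.sin s, Real.sin t / d * Real.cos s, 0, 0, 0, 0, 0, 0,
      Real.sqrt ((1 - Real.cos t) / 2), 0] := by
    simp only [ε1, div_mul_eq_mul_div]
  have e2 : ε1b = ![-(Real.sin t / d * Real.cos s), Real.sin t / d * Real.sin s, 0, 0, 0, 0, 0, 0,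
      0, Real.sqrt ((1 - Real.cos t) / 2)] := by
    simp only [ε1b, div_mul_eq_mul_div, neg_div]
  rw [e1, e2]
  clear_value ε1 ε1b
  change (Real.sin t / d) ^ 2 + _ = 1 at h1
  change _ * (Real.sin t / d) + _ = Real.sin t / d at h2
  change _ * (Real.sin t / d) - _ = _ at h3
  generalize Real.sin t / d = a at *
  generalize Real.sqrt ((1 - Real.cos t) / 2) = q at *
  have hR1 : R (π / 2 - s) = !![Real.sin s, -Real.cos s; Real.cos s, Real.sin s] := by
    ext i j
    fin_cases i <;> fin_cases j <;>
      simp [R, Jmat, Real.cos_pi_div_two_sub, Real.sin_pi_div_two_sub]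
  have hR2 : R (s - π / 2) = !![Real.sin s, Real.cos s; -Real.cos s, Real.sin s] := by
    ext i j
    fin_cases i <;> fin_cases j <;>
      simp [R, Jmat, Real.cos_sub_pi_div_two, Real.sin_sub_pi_div_two]
  refine ⟨?_, ?_, ?_, ?_, ?_⟩
  · simp [dotProduct, Fin.sum_univ_succ]
    linear_combination h1 + a ^ 2 * hs
  · simp [dotProduct, Fin.sum_univ_succ]
    linear_combination h1 + a ^ 2 * hs
  · simp [dotProduct, Fin.sum_univ_succ]
    ring
  · rw [A, hR1, hR2, ofBlocks_pattern_mulVec]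
    simp only [Matrix.smul_cons, Matrix.smul_empty, smul_zero]
    refine vec_congr ?_ ?_ ?_ ?_ <;> simp
    · linear_combination √3 * Real.sin s * h2
    · linear_combination √3 * Real.cos s * h2
    · linear_combination √3 * h3 + √3 * Real.sin t * a * hs
    · ring
  · rw [A, hR1, hR2, ofBlocks_pattern_mulVec]
    simp only [Matrix.smul_cons, Matrix.smul_empty, smul_zero]
    refine vec_congr ?_ ?_ ?_ ?_ <;> simp
    · linear_combination -√3 * Real.cos s * h2
    · linear_combination √3 * Real.sin s * h2
    · ring
    · linear_combination √3 * h3 + √3 * Real.sin t * a * hs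
end

section
/- Let $a, b$ be quaternions with $|a|=|b|=1$. Then $a j \bar a = b j \bar b$ and $a k \bar a = b k \bar b$ hold simultaneously if and only if $b = a$ or $b = -a$. Hence the map $\sigma(a) = \frac{1}{\sqrt{2}}(a j \bar a, a k \bar a)$ from the unit quaternions to $M_1$ is exactly two-to-one, i.e., a double covering onto its image. -/
/-!
Put `c = star a * b`, so that `b = a * c` and `‖c‖ = 1`. If `a` and `b` conjugate both `j` and `k`
to the same quaternions, then `c` commutes with `j` and `k` (`commute_of_conj_eq`), hence is real
(`eq_coe_re_of_commute_qj_qk`). A real quaternion of norm one is `1` or `-1`, so `b = a` or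
`b = -a`. The converse holds because the two signs cancel in `(-a) * q * star (-a)`.
-/

open Quaternion

/-- The quaternion unit `j`. -/
noncomputable def qj : ℍ[ℝ] := ⟨0, 0, 1, 0⟩

/-- The quaternion unit `k`. -/
noncomputable def qk : ℍ[ℝ] := ⟨0, 0, 0, 1⟩

/-- A quaternion commuting with both `j` and `k` is real: commuting with `j` kills the `i` and `k`
components, commuting with `k` kills the `j` component. -/
lemma eq_coe_re_of_commute_qj_qk {c : ℍ[ℝ]} (hj : qj * c = c * qj) (hk : qk * c = c * qk) :
    c = (c.re : ℍ[ℝ]) := by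
  have h1 := congrArg QuaternionAlgebra.imI hj
  have h2 := congrArg QuaternionAlgebra.imK hj
  have h3 := congrArg QuaternionAlgebra.imI hk
  rw [Quaternion.imI_mul, Quaternion.imI_mul] at h1 h3
  rw [Quaternion.imK_mul, Quaternion.imK_mul] at h2
  simp only [qj, qk] at h1 h2 h3
  ext <;> simp <;> linarith

lemma star_mul_self_of_norm_eq_one {a : ℍ[ℝ]} (ha : ‖a‖ = 1) : star a * a = 1 := by
  rw [Quaternion.star_mul_self, Quaternion.normSq_eq_norm_mul_self, ha]
  simp

lemma self_mul_star_of_norm_eq_one {a : ℍ[ℝ]} (ha : ‖a‖ = 1) : a * star a = 1 := by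
  rw [Quaternion.self_mul_star, Quaternion.normSq_eq_norm_mul_self, ha]
  simp

/-- If unit quaternions `a`, `b` conjugate `q` to the same quaternion, then `q` commutes with
`star a * b`. -/
lemma commute_of_conj_eq {a b q : ℍ[ℝ]} (ha : ‖a‖ = 1) (hb : ‖b‖ = 1)
    (h : a * q * star a = b * q * star b) : q * (star a * b) = star a * b * q := by
  calc q * (star a * b) = (star a * a) * q * (star a * b) := by
        rw [star_mul_self_of_norm_eq_one ha, one_mul]
    _ = star a * (a * q * star a) * b := by simp only [mul_assoc]
    _ = star a * b * q * (star b * b) := by rw [h]; simp only [mul_assoc]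
    _ = star a * b * q := by rw [star_mul_self_of_norm_eq_one hb, mul_one]

/-- For unit quaternions `a, b`, one has `a j ā = b j b̄` and `a k ā = b k b̄` simultaneously
iff `b = a` or `b = -a`; hence `σ(a) = (1/√2)(a j ā, a k ā)` is exactly two-to-one, a double
covering onto its image. -/
theorem stmt16 (a b : ℍ[ℝ]) (ha : ‖a‖ = 1) (hb : ‖b‖ = 1) :
    (a * qj * star a = b * qj * star b ∧ a * qk * star a = b * qk * star b) ↔
      (b = a ∨ b = -a) := by
  constructor
  · rintro ⟨hj, hk⟩
    have hc := eq_coe_re_of_commute_qj_qk (commute_of_conj_eq ha hb hj)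
      (commute_of_conj_eq ha hb hk)
    have hb' : b = a * (star a * b) := by
      rw [← mul_assoc, self_mul_star_of_norm_eq_one ha, one_mul]
    have hn : ‖star a * b‖ = 1 := by rw [norm_mul, norm_star, ha, hb, one_mul]
    rw [hc, Quaternion.norm_coe, Real.norm_eq_abs] at hn
    rw [hc] at hb'
    rcases eq_or_eq_neg_of_abs_eq hn with h | h
    · left; rw [hb', h]; simp
    · right; rw [hb', h]; simp
  · rintro (rfl | rfl) <;> simp
end

section
/- Define $\sigma:\mathbb{H}\to\mathbb{H}\times\mathbb{H}$ by $\sigma(a) = \frac{1}{\sqrt{2}}(a j \bar a,\ a k \bar a)$. For any quaternion $a$ with $|a|=1$, the (Fréchet) derivative of $\sigma$ at $a$ satisfies $\sigma'(a)(ai) = (\sqrt{2}\,a k \bar a,\ -\sqrt{2}\,a j \bar a)$, $\sigma'(a)(aj) = (0,\ \sqrt{2}\,a i \bar a)$, and $\sigma'(a)(ak) = (-\sqrt{2}\,a i \bar a,\ 0)$. Consequently these three image vectors are mutually orthogonal in $\mathbb{H}\times\mathbb{H}$ with squared norms $4$, $2$, $2$ respectively. -/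
/-!
On a tangent vector `a p` with `p` imaginary, the derivative of `a ↦ a q ā` is `a [p, q] ā`
(`fderiv_σFKM_mul`), so the three image vectors come from the commutators of `i`, `j`, `k`.
Since `q ↦ a q ā` is an isometry for `|a| = 1` (`inner_conj_of_norm_eq_one`), the Gram matrix
reduces to the orthonormality of `i, j, k`.
-/

open Quaternion RealInnerProductSpace

/-- The quaternion unit `i`. -/
noncomputable def qi : ℍ[ℝ] := ⟨0, 1, 0, 0⟩

/-- The map `σ(a) = (1/√2)(a j ā, a k ā) : ℍ → ℍ × ℍ`. -/
noncomputable def σFKM : ℍ[ℝ] → ℍ[ℝ] × ℍ[ℝ] :=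
  fun a => ((1 / Real.sqrt 2) • (a * qj * star a), (1 / Real.sqrt 2) • (a * qk * star a))

@[simp] lemma qi_re : qi.re = 0 := rfl
@[simp] lemma qi_imI : qi.imI = 1 := rfl
@[simp] lemma qi_imJ : qi.imJ = 0 := rfl
@[simp] lemma qi_imK : qi.imK = 0 := rfl
@[simp] lemma qj_re : qj.re = 0 := rfl
@[simp] lemma qj_imI : qj.imI = 0 := rfl
@[simp] lemma qj_imJ : qj.imJ = 1 := rfl
@[simp] lemma qj_imK : qj.imK = 0 := rfl
@[simp] lemma qk_re : qk.re = 0 := rfl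
@[simp] lemma qk_imI : qk.imI = 0 := rfl
@[simp] lemma qk_imJ : qk.imJ = 0 := rfl
@[simp] lemma qk_imK : qk.imK = 1 := rfl

/-- `σ` is quadratic in `a`, so the product rule gives its derivative as the polarization; along `h = a p`
with `p` purely imaginary (`p̄ = -p`), each component becomes the conjugate by `a` of a commutator,
`a (p q - q p) ā`. -/
lemma fderiv_σFKM_mul (a p : ℍ[ℝ]) (hp : star p = -p) :
    fderiv ℝ σFKM a (a * p) =
      ((1 / Real.sqrt 2) • (a * (p * qj - qj * p) * star a),
       (1 / Real.sqrt 2) • (a * (p * qk - qk * p) * star a)) := by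
  have : StarModule ℝ ℍ[ℝ] := ⟨fun r x => by ext <;> simp⟩
  have key (q : ℍ[ℝ]) := (((hasFDerivAt_id (𝕜 := ℝ) a).mul_const' q).mul'
    (starL' ℝ (A := ℍ[ℝ])).toContinuousLinearMap.hasFDerivAt).const_smul (1 / Real.sqrt 2)
  have h : HasFDerivAt σFKM _ a := (key qj).prodMk (key qk)
  rw [h.fderiv]
  ext1 <;>
  · simp [hp, mul_sub, sub_mul, mul_assoc]
    module

/-- Conjugation by a unit quaternion is an isometry of `ℍ`. -/
lemma inner_conj_of_norm_eq_one (a p q : ℍ[ℝ]) (ha : ‖a‖ = 1) :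
    ⟪a * p * star a, a * q * star a⟫ = ⟪p, q⟫ := by
  have hn : normSq a = 1 := by rw [normSq_eq_norm_mul_self, ha, one_mul]
  rw [normSq_def'] at hn
  simp only [Quaternion.inner_def]
  simp
  have h2 : (a.re ^ 2 + a.imI ^ 2 + a.imJ ^ 2 + a.imK ^ 2) ^ 2 = 1 := by rw [hn, one_pow]
  linear_combination (p.re * q.re + p.imI * q.imI + p.imJ * q.imJ + p.imK * q.imK) * h2

/-- For a unit quaternion `a`, the Fréchet derivative of `σ` at `a` sends
`ai ↦ (√2 a k ā, -√2 a j ā)`, `aj ↦ (0, √2 a i ā)`, `ak ↦ (-√2 a i ā, 0)`; these three image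
vectors are mutually orthogonal in `ℍ × ℍ` (inner product `⟨p,q⟩ = Re(p q̄)` componentwise)
with squared norms `4`, `2`, `2` respectively. -/
theorem stmt17 (a : ℍ[ℝ]) (ha : ‖a‖ = 1) :
    let v1 : ℍ[ℝ] × ℍ[ℝ] :=
      (Real.sqrt 2 • (a * qk * star a), -(Real.sqrt 2 • (a * qj * star a)))
    let v2 : ℍ[ℝ] × ℍ[ℝ] := (0, Real.sqrt 2 • (a * qi * star a))
    let v3 : ℍ[ℝ] × ℍ[ℝ] := (-(Real.sqrt 2 • (a * qi * star a)), 0)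
    fderiv ℝ σFKM a (a * qi) = v1 ∧
    fderiv ℝ σFKM a (a * qj) = v2 ∧
    fderiv ℝ σFKM a (a * qk) = v3 ∧
    ⟪v1.1, v2.1⟫ + ⟪v1.2, v2.2⟫ = 0 ∧
    ⟪v1.1, v3.1⟫ + ⟪v1.2, v3.2⟫ = 0 ∧
    ⟪v2.1, v3.1⟫ + ⟪v2.2, v3.2⟫ = 0 ∧
    ⟪v1.1, v1.1⟫ + ⟪v1.2, v1.2⟫ = 4 ∧
    ⟪v2.1, v2.1⟫ + ⟪v2.2, v2.2⟫ = 2 ∧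
    ⟪v3.1, v3.1⟫ + ⟪v3.2, v3.2⟫ = 2 := by
  have hc : 1 / Real.sqrt 2 * 2 = Real.sqrt 2 := by
    rw [div_mul_eq_mul_div, one_mul, Real.div_sqrt]
  have comm (x y z : ℍ[ℝ]) (c : ℝ) (h : x * y - y * x = c • z) :
      (1 / Real.sqrt 2) • (a * (x * y - y * x) * star a) =
        (1 / Real.sqrt 2 * c) • (a * z * star a) := by
    rw [h, mul_smul_comm, smul_mul_assoc, smul_smul]
  have hij : qi * qj - qj * qi = (2 : ℝ) • qk := by ext <;> simp; norm_num
  have hik : qi * qk - qk * qi = (-2 : ℝ) • qj := by ext <;> simp; norm_num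
  have hjk : qj * qk - qk * qj = (2 : ℝ) • qi := by ext <;> simp; norm_num
  have hkj : qk * qj - qj * qk = (-2 : ℝ) • qi := by ext <;> simp; norm_num
  have si : star qi = -qi := by ext <;> simp
  have sj : star qj = -qj := by ext <;> simp
  have sk : star qk = -qk := by ext <;> simp
  intro v1 v2 v3
  refine ⟨?_, ?_, ?_, ?_, ?_, ?_, ?_, ?_, ?_⟩
  · rw [fderiv_σFKM_mul a qi si, comm _ _ _ _ hij, comm _ _ _ _ hik, mul_neg, hc, neg_smul]
  · rw [fderiv_σFKM_mul a qj sj, comm _ _ _ _ hjk, hc, sub_self, mul_zero, zero_mul, smul_zero]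
  · rw [fderiv_σFKM_mul a qk sk, comm _ _ _ _ hkj, mul_neg, hc, sub_self, mul_zero, zero_mul,
      smul_zero, neg_smul]
  all_goals
    simp only [v1, v2, v3, inner_neg_left, inner_neg_right, real_inner_smul_left,
      real_inner_smul_right, inner_zero_left, inner_zero_right,
      inner_conj_of_norm_eq_one _ _ _ ha, Quaternion.inner_def]
    simp
  norm_num
end
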